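/- Let A = diag(a₁,…,aₙ) be a real diagonal n×n matrix and let X(t), Y(t) be twice differentiable curves of n×r real matrices satisfying the constraint XᵀY = I_r for all t and the rank r double Neumann equations Ẍ = −AX + XΛᵀ, Ÿ = −AY + YΛ, where Λ = XᵀAY − ẊᵀẎ. Then the r×r matrix XᵀẎ − YᵀẊ is a first integral: d/dt (XᵀẎ − YᵀẊ) = 0 for all t. -/

import Mathlib

open Matrix

/-!
The potential `tr(XᵀAY)` with an arbitrary matrix `A` gives the equations `Ẍ = -AᵀX + XΛᵀ` and
`Ÿ = -AY + YΛ`. Here `XᵀẎ` is already conserved by itself: the constraint `XᵀY = 1` yields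
`XᵀŸ = -XᵀAY + Λ = -ẊᵀẎ`, so `ẊᵀẎ + XᵀŸ = 0`. The system is invariant under exchanging
`(X, A, Λ)` with `(Y, Aᵀ, Λᵀ)`, so `YᵀẊ` is conserved too.
-/

section

variable {𝕜 l m n : Type*} [NontriviallyNormedField 𝕜] {t : 𝕜}

section Entrywise

variable {E : Type*} [NormedAddCommGroup E] [NormedSpace 𝕜 E] [Finite m] [Finite n]
  {M : 𝕜 → Matrix m n E} {M' : Matrix m n E}

theorem hasDerivAt_matrix_iff :
    HasDerivAt M M' t ↔ ∀ i j, HasDerivAt (fun s => M s i j) (M' i j) t := by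
  have := Fintype.ofFinite m
  have := Fintype.ofFinite n
  exact hasDerivAt_pi.trans (forall_congr' fun _ => hasDerivAt_pi)

theorem hasDerivAt_matrix_transpose (hM : HasDerivAt M M' t) :
    HasDerivAt (fun s => (M s)ᵀ) M'ᵀ t :=
  hasDerivAt_matrix_iff.2 fun i j => hasDerivAt_matrix_iff.1 hM j i

end Entrywise

section Ring

variable {R : Type*} [NormedRing R] [NormedAlgebra 𝕜 R]

theorem hasDerivAt_matrix_mul [Finite l] [Fintype m] [Finite n]
    {M : 𝕜 → Matrix l m R} {N : 𝕜 → Matrix m n R} {M' : Matrix l m R} {N' : Matrix m n R}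
    (hM : HasDerivAt M M' t) (hN : HasDerivAt N N' t) :
    HasDerivAt (fun s => M s * N s) (M' * N t + M t * N') t := by
  rw [hasDerivAt_matrix_iff] at hM hN ⊢
  intro i j
  simp only [mul_apply, Matrix.add_apply, ← Finset.sum_add_distrib]
  exact .fun_sum fun k _ => (hM i k).fun_mul (hN k j)

theorem hasDerivAt_transpose_mul_velocity_zero [Fintype m] [Fintype n] [DecidableEq n]
    {A : Matrix m m R} {L : Matrix n n R} {X Y Y' : 𝕜 → Matrix m n R} {X' : Matrix m n R}
    (hconstr : (X t)ᵀ * Y t = 1) (hL : L = (X t)ᵀ * A * Y t - X'ᵀ * Y' t)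
    (hX : HasDerivAt X X' t) (hY' : HasDerivAt Y' (-(A * Y t) + Y t * L) t) :
    HasDerivAt (fun s => (X s)ᵀ * Y' s) 0 t := by
  have hforce : (X t)ᵀ * (-(A * Y t) + Y t * L) = -(X'ᵀ * Y' t) :=
    calc (X t)ᵀ * (-(A * Y t) + Y t * L)
        = -((X t)ᵀ * A * Y t) + (X t)ᵀ * Y t * L := by
          rw [Matrix.mul_add, Matrix.mul_neg, Matrix.mul_assoc, Matrix.mul_assoc]
      _ = -(X'ᵀ * Y' t) := by rw [hconstr, Matrix.one_mul, hL]; abel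
  have hderiv := hasDerivAt_matrix_mul (hasDerivAt_matrix_transpose (E := R) hX) hY'
  rwa [hforce, add_neg_cancel] at hderiv

end Ring

theorem double_neumann_matrix_integral_general {R : Type*} [NormedCommRing R] [NormedAlgebra 𝕜 R]
    [Fintype m] [Fintype n] [DecidableEq n] {A : Matrix m m R} {L : Matrix n n R}
    {X Y X' Y' : 𝕜 → Matrix m n R}
    (hconstr : (X t)ᵀ * Y t = 1) (hL : L = (X t)ᵀ * A * Y t - (X' t)ᵀ * Y' t)
    (hX : HasDerivAt X (X' t) t) (hY : HasDerivAt Y (Y' t) t)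
    (hX' : HasDerivAt X' (-(Aᵀ * X t) + X t * Lᵀ) t)
    (hY' : HasDerivAt Y' (-(A * Y t) + Y t * L) t) :
    HasDerivAt (fun s => (X s)ᵀ * Y' s) 0 t ∧ HasDerivAt (fun s => (Y s)ᵀ * X' s) 0 t := by
  have hconstr_swap : (Y t)ᵀ * X t = 1 := by
    simpa only [transpose_mul, transpose_transpose, transpose_one] using
      congrArg transpose hconstr
  have hL_swap : Lᵀ = (Y t)ᵀ * Aᵀ * X t - (Y' t)ᵀ * X' t := by
    simp only [hL, transpose_sub, transpose_mul, transpose_transpose, Matrix.mul_assoc]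
  exact ⟨hasDerivAt_transpose_mul_velocity_zero hconstr hL hX hY',
    hasDerivAt_transpose_mul_velocity_zero hconstr_swap hL_swap hY hX'⟩

end

/-- For the rank r double Neumann system the matrix XᵀẎ − YᵀẊ is a
first integral. -/
theorem double_neumann_matrix_integral {n r : ℕ} (a : Fin n → ℝ)
    (A : Matrix (Fin n) (Fin n) ℝ) (hA : A = Matrix.diagonal a)
    (X Y X' Y' : ℝ → Matrix (Fin n) (Fin r) ℝ)
    (hconstr : ∀ t, (X t)ᵀ * Y t = 1)
    (hX' : ∀ t i j, HasDerivAt (fun s => X s i j) (X' t i j) t)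
    (hY' : ∀ t i j, HasDerivAt (fun s => Y s i j) (Y' t i j) t)
    (Lam : ℝ → Matrix (Fin r) (Fin r) ℝ)
    (hLam : ∀ t, Lam t = (X t)ᵀ * A * Y t - (X' t)ᵀ * Y' t)
    (hX'' : ∀ t i j, HasDerivAt (fun s => X' s i j)
      ((-(A * X t) + X t * (Lam t)ᵀ) i j) t)
    (hY'' : ∀ t i j, HasDerivAt (fun s => Y' s i j)
      ((-(A * Y t) + Y t * Lam t) i j) t) :
    ∀ t i j, HasDerivAt (fun s => ((X s)ᵀ * Y' s - (Y s)ᵀ * X' s) i j) 0 t := by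
  intro t i j
  have hA_symm : Aᵀ = A := by rw [hA, diagonal_transpose]
  obtain ⟨hXY', hYX'⟩ := double_neumann_matrix_integral_general (hconstr t) (hLam t)
    (hasDerivAt_matrix_iff.2 (hX' t)) (hasDerivAt_matrix_iff.2 (hY' t))
    (hasDerivAt_matrix_iff.2 (by rw [hA_symm]; exact hX'' t)) (hasDerivAt_matrix_iff.2 (hY'' t))
  simpa only [Matrix.sub_apply, Matrix.zero_apply, sub_zero] using
    (hasDerivAt_matrix_iff.1 hXY' i j).fun_sub (hasDerivAt_matrix_iff.1 hYX' i j)
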